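/- arXiv:1510.01901 — 3 statements merged into one kernel-verified Lean document; each statement's English description precedes it below -/
import Mathlib

section
/- For any pair of positive integers a and b, if there are only finitely many n ∈ ℕ for which ζ(an+b) is irrational, then the sequence {q_n} of common denominators grows super-exponentially: q_n^{1/n} → ∞ as n → ∞. (Equivalently: either infinitely many of the values ζ(an+b), n ∈ ℕ, are irrational, or q_n^{1/n} → ∞.) -/
/-!
If `P ∈ ℤ[X]` vanishes at `1, 2⁻ᵃ, …, r⁻ᵃ`, then `∑ₘ m^{-(ak+b)} P(m⁻ᵃ)` is an integer combination
of `ζ(ak+b), …, ζ(a(k+r)+b)` to which only the terms with `m > r` contribute. Choosing `P` positive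
to the left of its roots, this combination is positive and `O((r+1)^{-ak})`, while multiplying it by
a common denominator `d` of the zeta values gives an integer. Hence `d` grows at least like
`(r+1)^{ak}`, and `r` is arbitrary. The argument applies to the moments `∑ₘ cₘ xₘᵏ` of any positive
weights `cₘ` at rational nodes `xₘ` strictly decreasing to `0`.
-/

open Asymptotics Filter Polynomial Topology

theorem tendsto_rpow_inv_natCast_atTop_of_pow_isBigO {u : ℕ → ℝ} (hu : ∀ n, 0 ≤ u n)
    (hpow : ∀ B : ℝ, (fun n ↦ B ^ n) =O[atTop] u) :
    Tendsto (fun n : ℕ ↦ u n ^ ((n : ℝ)⁻¹)) atTop atTop := by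
  refine tendsto_atTop.2 fun B ↦ ?_
  set A : ℝ := max B 1
  have hA : 0 < A := lt_max_of_lt_right one_pos
  have hlittle : (fun n ↦ A ^ n) =o[atTop] u :=
    (isLittleO_pow_pow_of_lt_left hA.le (lt_add_one A)).trans_isBigO (hpow (A + 1))
  filter_upwards [hlittle.bound one_pos, eventually_ne_atTop 0] with n hn hn0
  have hAn : A ^ n ≤ u n := by
    simpa only [one_mul, Real.norm_of_nonneg (pow_pos hA n).le, Real.norm_of_nonneg (hu n)] using hn
  calc B ≤ A := le_max_left B 1
    _ = (A ^ n) ^ ((n : ℝ)⁻¹) := (Real.pow_rpow_inv_natCast hA.le hn0).symm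
    _ ≤ u n ^ ((n : ℝ)⁻¹) := by gcongr

theorem hasSum_mul_pow_mul_aeval {ι R : Type*} [CommRing R] [TopologicalSpace R]
    [IsTopologicalRing R] {c x : ι → R} {s : ℕ → R} {k : ℕ} (P : ℤ[X])
    (hs : ∀ i ≤ P.natDegree, HasSum (fun m ↦ c m * x m ^ (k + i)) (s (k + i))) :
    HasSum (fun m ↦ c m * x m ^ k * aeval (x m) P) (P.sum fun i p ↦ (p : R) * s (k + i)) := by
  have hterm (m : ι) : c m * x m ^ k * aeval (x m) P =
      ∑ i ∈ P.support, (P.coeff i : R) * (c m * x m ^ (k + i)) := by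
    rw [aeval_def, eval₂_eq_sum, Polynomial.sum, Finset.mul_sum]
    refine Finset.sum_congr rfl fun i _ ↦ ?_
    rw [eq_intCast, pow_add]
    ring
  simp only [hterm]
  exact hasSum_sum fun i hi ↦ (hs i (le_natDegree_of_mem_supp i hi)).mul_left _

theorem mul_sum_intCast_mul_mem {R : Type*} [CommRing R] (S : Subring R) {s : ℕ → R} {d : R}
    {k : ℕ} (P : ℤ[X]) (hs : ∀ i ≤ P.natDegree, d * s (k + i) ∈ S) :
    d * P.sum (fun i p ↦ (p : R) * s (k + i)) ∈ S := by
  rw [Polynomial.sum, Finset.mul_sum]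
  refine sum_mem fun i hi ↦ ?_
  rw [mul_left_comm]
  exact mul_mem (intCast_mem S _) (hs i (le_natDegree_of_mem_supp i hi))

/-- The integer polynomial with roots `x 0, …, x (r - 1)`, used to cancel the first `r` terms of a
moment sum. Denominators are cleared, and signs are chosen so that the polynomial is positive to the
left of all its roots. -/
noncomputable def nodePolynomial (x : ℕ → ℚ) (r : ℕ) : ℤ[X] :=
  ∏ j ∈ Finset.range r, (C (x j).num - C ((x j).den : ℤ) * X)

section NodePolynomial

variable {x : ℕ → ℚ} {r : ℕ} {y : ℝ}

theorem aeval_nodePolynomial (x : ℕ → ℚ) (r : ℕ) (y : ℝ) :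
    aeval y (nodePolynomial x r) = ∏ j ∈ Finset.range r, ((x j).den : ℝ) * (x j - y) := by
  have hnum (j : ℕ) : ((x j).num : ℝ) = (x j).den * x j := by
    exact_mod_cast (Rat.den_mul_eq_num (x j)).symm
  simp [nodePolynomial, hnum, mul_sub]

theorem aeval_nodePolynomial_eq_zero {m : ℕ} (hm : m < r) :
    aeval (x m : ℝ) (nodePolynomial x r) = 0 := by
  rw [aeval_nodePolynomial]
  exact Finset.prod_eq_zero (Finset.mem_range.2 hm) (by simp)

theorem aeval_nodePolynomial_pos (hy : ∀ j < r, y < x j) :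
    0 < aeval y (nodePolynomial x r) := by
  rw [aeval_nodePolynomial]
  refine Finset.prod_pos fun j hj ↦ mul_pos (mod_cast (x j).den_pos) ?_
  exact sub_pos.2 (hy j (Finset.mem_range.1 hj))

theorem aeval_nodePolynomial_le_aeval_zero (hy0 : 0 ≤ y) (hy : ∀ j < r, y ≤ x j) :
    aeval y (nodePolynomial x r) ≤ aeval (0 : ℝ) (nodePolynomial x r) := by
  simp only [aeval_nodePolynomial]
  refine Finset.prod_le_prod (fun j hj ↦ ?_) fun j _ ↦ by gcongr
  exact mul_nonneg (Nat.cast_nonneg _) (sub_nonneg.2 (hy j (Finset.mem_range.1 hj)))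

theorem aeval_nodePolynomial_nonneg (hy : ∀ j < r, y ≤ x j) :
    0 ≤ aeval y (nodePolynomial x r) := by
  rw [aeval_nodePolynomial]
  refine Finset.prod_nonneg fun j hj ↦ mul_nonneg (Nat.cast_nonneg _) ?_
  exact sub_nonneg.2 (hy j (Finset.mem_range.1 hj))

theorem aeval_nodePolynomial_node_nonneg (hx : Antitone x) (r m : ℕ) :
    0 ≤ aeval (x m : ℝ) (nodePolynomial x r) := by
  rcases lt_or_ge m r with hm | hm
  · exact (aeval_nodePolynomial_eq_zero hm).ge
  · exact aeval_nodePolynomial_nonneg fun j hj ↦ mod_cast hx (hj.le.trans hm)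

end NodePolynomial

section Moments

variable {x : ℕ → ℚ} {c s : ℕ → ℝ} {k r : ℕ}

theorem nodePolynomial_moment_pos (hx : StrictAnti x) (hx0 : ∀ m, 0 < x m) (hc : ∀ m, 0 < c m)
    {v : ℝ} (hv : HasSum (fun m ↦ c m * (x m : ℝ) ^ k * aeval (x m : ℝ) (nodePolynomial x r)) v) :
    0 < v := by
  have hweight (m : ℕ) : 0 < c m * (x m : ℝ) ^ k := mul_pos (hc m) (pow_pos (mod_cast hx0 m) k)
  have hpos : 0 < aeval (x r : ℝ) (nodePolynomial x r) :=
    aeval_nodePolynomial_pos fun j hj ↦ mod_cast hx hj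
  refine (mul_pos (hweight r) hpos).trans_le (le_hasSum hv r fun m _ ↦ ?_)
  exact mul_nonneg (hweight m).le (aeval_nodePolynomial_node_nonneg hx.antitone r m)

theorem nodePolynomial_moment_le (hx : Antitone x) (hx0 : ∀ m, 0 ≤ x m) (hc : ∀ m, 0 ≤ c m)
    {l : ℕ} {v w : ℝ} (hw : HasSum (fun m ↦ c m * (x m : ℝ) ^ k) w)
    (hv : HasSum (fun m ↦ c m * (x m : ℝ) ^ (k + l) * aeval (x m : ℝ) (nodePolynomial x r)) v) :
    v ≤ (x r : ℝ) ^ l * aeval (0 : ℝ) (nodePolynomial x r) * w := by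
  have hx0' (m : ℕ) : (0 : ℝ) ≤ x m := mod_cast hx0 m
  have hnonneg : 0 ≤ aeval (0 : ℝ) (nodePolynomial x r) :=
    aeval_nodePolynomial_nonneg fun j _ ↦ hx0' j
  refine hasSum_le (fun m ↦ ?_) hv (hw.mul_left _)
  have hcm := hc m
  have hxm := hx0' m
  have hxr0 := hx0' r
  rcases lt_or_ge m r with hm | hm
  · rw [aeval_nodePolynomial_eq_zero hm, mul_zero]
    positivity
  · have hxr : (x m : ℝ) ≤ x r := mod_cast hx hm
    have hle : aeval (x m : ℝ) (nodePolynomial x r) ≤ aeval (0 : ℝ) (nodePolynomial x r) :=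
      aeval_nodePolynomial_le_aeval_zero hxm fun j hj ↦ mod_cast hx (hj.le.trans hm)
    calc c m * (x m : ℝ) ^ (k + l) * aeval (x m : ℝ) (nodePolynomial x r)
        ≤ c m * ((x m : ℝ) ^ k * (x r : ℝ) ^ l) * aeval (0 : ℝ) (nodePolynomial x r) := by
          have hnode := aeval_nodePolynomial_node_nonneg hx r m
          rw [pow_add]
          gcongr
      _ = (x r : ℝ) ^ l * aeval (0 : ℝ) (nodePolynomial x r) * (c m * (x m : ℝ) ^ k) := by ring

theorem one_le_mul_of_mul_moment_mem_range_intCast (hx : StrictAnti x) (hx0 : ∀ m, 0 < x m)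
    (hc : ∀ m, 0 < c m) (hs : ∀ i ≥ k, HasSum (fun m ↦ c m * (x m : ℝ) ^ i) (s i))
    {d l : ℕ} (hd0 : 0 < d)
    (hd : ∀ i ≤ (nodePolynomial x r).natDegree,
      (d : ℝ) * s (k + l + i) ∈ (Int.castRingHom ℝ).range) :
    1 ≤ d * ((x r : ℝ) ^ l * aeval (0 : ℝ) (nodePolynomial x r) * s k) := by
  have hv := hasSum_mul_pow_mul_aeval (k := k + l) (nodePolynomial x r)
    fun i _ ↦ hs (k + l + i) (by lia)
  obtain ⟨z, hz : (z : ℝ) = _⟩ := mul_sum_intCast_mul_mem _ (nodePolynomial x r) hd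
  set v := (nodePolynomial x r).sum fun i p ↦ (p : ℝ) * s (k + l + i)
  have hz0 : (0 : ℝ) < z :=
    hz ▸ mul_pos (Nat.cast_pos.2 hd0) (nodePolynomial_moment_pos hx hx0 hc hv)
  calc (1 : ℝ) ≤ z := by exact_mod_cast hz0
    _ = d * v := hz
    _ ≤ _ := by
      gcongr
      exact nodePolynomial_moment_le hx.antitone (fun m ↦ (hx0 m).le) (fun m ↦ (hc m).le)
        (hs k le_rfl) hv

variable {q : ℕ → ℕ}

theorem inv_pow_isBigO_moment_denominators (hx : StrictAnti x) (hx0 : ∀ m, 0 < x m)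
    (hc : ∀ m, 0 < c m) (hs : ∀ᶠ k in atTop, HasSum (fun m ↦ c m * (x m : ℝ) ^ k) (s k))
    (hq0 : ∀ n, 0 < q n)
    (hq : ∀ᶠ k in atTop, ∀ n ≥ k, (q n : ℝ) * s k ∈ (Int.castRingHom ℝ).range) (r : ℕ) :
    (fun n ↦ (x r : ℝ)⁻¹ ^ n) =O[atTop] fun n ↦ (q n : ℝ) := by
  obtain ⟨k, hk⟩ := eventually_atTop.1 (hs.and hq)
  set D := (nodePolynomial x r).natDegree
  have hxr : (0 : ℝ) < x r := mod_cast hx0 r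
  refine IsBigO.of_bound
    ((x r : ℝ)⁻¹ ^ (k + D) * (aeval (0 : ℝ) (nodePolynomial x r) * s k)) ?_
  filter_upwards [eventually_ge_atTop (k + D)] with n hn
  obtain ⟨l, rfl⟩ := Nat.exists_eq_add_of_le hn
  have hone := one_le_mul_of_mul_moment_mem_range_intCast (r := r) (l := l) hx hx0 hc
    (fun i hi ↦ (hk i hi).1) (hq0 (k + D + l)) fun i hi ↦ (hk _ (by lia)).2 _ (by lia)
  rw [Real.norm_of_nonneg (by positivity), Real.norm_of_nonneg (Nat.cast_nonneg _)]
  calc (x r : ℝ)⁻¹ ^ (k + D + l) ≤ (x r : ℝ)⁻¹ ^ (k + D + l) * _ :=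
        le_mul_of_one_le_right (by positivity) hone
    _ = _ := by
      rw [pow_add _ (k + D) l, inv_pow _ l]
      field_simp

theorem tendsto_moment_denominators_rpow_inv_atTop (hx : StrictAnti x)
    (hx_lim : Tendsto x atTop (𝓝 0)) (hc : ∀ m, 0 < c m)
    (hs : ∀ᶠ k in atTop, HasSum (fun m ↦ c m * (x m : ℝ) ^ k) (s k)) (hq0 : ∀ n, 0 < q n)
    (hq : ∀ᶠ k in atTop, ∀ n ≥ k, (q n : ℝ) * s k ∈ (Int.castRingHom ℝ).range) :
    Tendsto (fun n : ℕ ↦ (q n : ℝ) ^ ((n : ℝ)⁻¹)) atTop atTop := by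
  have hx0 (m : ℕ) : 0 < x m :=
    (hx.antitone.le_of_tendsto hx_lim (m + 1)).trans_lt (hx m.lt_succ_self)
  have hinv : Tendsto (fun m ↦ (((x m)⁻¹ : ℚ) : ℝ)) atTop atTop :=
    tendsto_ratCast_atTop_iff.2 <|
      (tendsto_nhdsWithin_iff.2 ⟨hx_lim, .of_forall hx0⟩).inv_tendsto_nhdsGT_zero
  refine tendsto_rpow_inv_natCast_atTop_of_pow_isBigO (fun n ↦ Nat.cast_nonneg _) fun B ↦ ?_
  obtain ⟨r, hr⟩ := (hinv.eventually_ge_atTop |B|).exists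
  have hB : (fun n ↦ B ^ n) =O[atTop] fun n ↦ (x r : ℝ)⁻¹ ^ n := by
    refine isBigO_of_le _ fun n ↦ ?_
    rw [norm_pow, norm_pow, Real.norm_eq_abs]
    gcongr
    exact (mod_cast hr : |B| ≤ (x r : ℝ)⁻¹).trans (le_abs_self _)
  exact hB.trans (inv_pow_isBigO_moment_denominators hx hx0 hc hs hq0 hq r)

end Moments

theorem hasSum_inv_add_one_pow_riemannZeta_re {k : ℕ} (hk : 1 < k) :
    HasSum (fun m : ℕ ↦ (((m : ℝ) + 1) ^ k)⁻¹) (riemannZeta k).re := by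
  have hsummable : Summable fun m : ℕ ↦ (((m : ℝ) + 1) ^ k)⁻¹ :=
    mod_cast (summable_nat_add_iff 1).2 (Real.summable_nat_pow_inv.2 hk)
  have hzeta : riemannZeta k = ((∑' m : ℕ, (((m : ℝ) + 1) ^ k)⁻¹ : ℝ) : ℂ) := by
    rw [zeta_eq_tsum_one_div_nat_add_one_cpow (by simpa using hk)]
    simp [Complex.ofReal_tsum]
  simpa only [hzeta, Complex.ofReal_re] using hsummable.hasSum

theorem strictAnti_inv_add_one_pow {a : ℕ} (ha : a ≠ 0) :
    StrictAnti fun m : ℕ ↦ (((m : ℚ) + 1) ^ a)⁻¹ := by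
  intro m n hmn
  dsimp only
  gcongr

theorem tendsto_inv_add_one_pow_nhds_zero {a : ℕ} (ha : a ≠ 0) :
    Tendsto (fun m : ℕ ↦ (((m : ℚ) + 1) ^ a)⁻¹) atTop (𝓝 0) :=
  ((tendsto_pow_atTop ha).comp
    (tendsto_natCast_atTop_atTop.atTop_add tendsto_const_nhds)).inv_tendsto_atTop

/-- **Theorem 1** (Haynes–Zudilin). For positive integers `a` and `b`, if only finitely
many of the values `ζ(an+b)` (for `n ≥ 1`) are irrational, then the sequence `q n` of
common denominators of the rational elements of `{ζ(a+b), ζ(2a+b), …, ζ(an+b)}` grows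
super-exponentially: `(q n)^(1/n) → ∞` as `n → ∞`. -/
theorem hankel_zeta_superexponential_denominators
    (a b : ℕ) (ha : 0 < a) (hb : 0 < b)
    (hfin : {n : ℕ | 0 < n ∧ ¬ ∃ r : ℚ, riemannZeta ((a * n + b : ℕ) : ℂ) = (r : ℂ)}.Finite)
    (q : ℕ → ℕ)
    (hq : ∀ n : ℕ, IsLeast {d : ℕ | 0 < d ∧ ∀ k : ℕ, 1 ≤ k → k ≤ n →
        (∃ r : ℚ, riemannZeta ((a * k + b : ℕ) : ℂ) = (r : ℂ)) →
        ∃ z : ℤ, (d : ℂ) * riemannZeta ((a * k + b : ℕ) : ℂ) = (z : ℂ)} (q n)) :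
    Filter.Tendsto (fun n : ℕ => (q n : ℝ) ^ ((n : ℝ)⁻¹)) Filter.atTop Filter.atTop := by
  refine tendsto_moment_denominators_rpow_inv_atTop
    (x := fun m ↦ (((m : ℚ) + 1) ^ a)⁻¹) (c := fun m ↦ (((m : ℝ) + 1) ^ b)⁻¹)
    (s := fun k ↦ (riemannZeta ((a * k + b : ℕ) : ℂ)).re)
    (strictAnti_inv_add_one_pow ha.ne') (tendsto_inv_add_one_pow_nhds_zero ha.ne')
    (fun m ↦ by positivity) ?_ (fun n ↦ (hq n).1.1) ?_
  · filter_upwards [eventually_gt_atTop 0] with k hk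
    have hexp : 1 < a * k + b := by nlinarith
    convert hasSum_inv_add_one_pow_riemannZeta_re hexp using 2 with m
    push_cast
    rw [inv_pow, ← mul_inv, ← pow_mul, ← pow_add, add_comm b]
  · have hrational := Nat.cofinite_eq_atTop ▸ hfin.eventually_cofinite_notMem
    filter_upwards [hrational, eventually_gt_atTop 0] with k hk hk0 n hkn
    obtain ⟨z, hz⟩ := (hq n).1.2 k hk0 hkn (not_not.1 fun h ↦ hk ⟨hk0, h⟩)
    exact ⟨z, by simpa using (congrArg Complex.re hz).symm⟩
end

section
/- For any positive integers a and b there exists a constant C' > 0 such that for all sufficiently large n, log|det_{1≤i,j≤n}(ζ(a(i+j)+b))| ≤ -(a/2)·n²·log n + C'·n². -/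
/-!
With nodes `x k = (k + 1) ^ (-a)` and weights `w k = (k + 1) ^ (-(2 * a + b))`, the entries
`ζ(a(i+j)+b)` are the moments `∑ w k * x k ^ (i + j)` of a discrete measure. A Hankel matrix of
moments is the Gram matrix of the monomials, so it is positive definite, and its determinant does
not change when the monomials are replaced by the Newton polynomials `∏ i < l, (X - x i)`. Since
the nodes decrease to `0`, the `l`-th Newton polynomial vanishes at the first `l` nodes and is
bounded by `∏ i < l, x i = (l !) ^ (-a)` at the others. Expanding the determinant in the new basis
gives `det ≤ n ! * (∑ w) ^ n * ∏ l < n, (l !) ^ (-2 * a)`, whose logarithm is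
`-a * n ^ 2 * log n + O(n ^ 2)`.
-/

open Polynomial Finset
open scoped Matrix Nat

section Determinant

variable {m R : Type*} [Fintype m] [DecidableEq m] [NormedCommRing R] [NormOneClass R]

lemma norm_det_le_of_norm_le_mul {A : Matrix m m R} {u v : m → ℝ}
    (hA : ∀ i j, ‖A i j‖ ≤ u i * v j) :
    ‖A.det‖ ≤ (Fintype.card m)! * ((∏ i, u i) * ∏ j, v j) := by
  have norm_term_le (σ : Equiv.Perm m) :
      ‖Equiv.Perm.sign σ • ∏ i, A (σ i) i‖ ≤ (∏ i, u i) * ∏ j, v j :=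
    calc ‖Equiv.Perm.sign σ • ∏ i, A (σ i) i‖
      _ = ‖∏ i, A (σ i) i‖ := norm_units_zsmul _ _
      _ ≤ ∏ i, ‖A (σ i) i‖ := norm_prod_le _ _
      _ ≤ ∏ i, u (σ i) * v i := by gcongr; exact hA _ _
      _ = (∏ i, u i) * ∏ j, v j := by rw [prod_mul_distrib, Equiv.prod_comp σ u]
  calc ‖A.det‖
    _ = ‖∑ σ : Equiv.Perm m, Equiv.Perm.sign σ • ∏ i, A (σ i) i‖ := by rw [Matrix.det_apply]
    _ ≤ ∑ _σ : Equiv.Perm m, (∏ i, u i) * ∏ j, v j := norm_sum_le_of_le _ fun σ _ ↦ norm_term_le σ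
    _ = (Fintype.card m)! * ((∏ i, u i) * ∏ j, v j) := by simp [Fintype.card_perm]

end Determinant

section MomentMatrix

variable {ι : Type*} {w x : ι → ℝ}

/-- The `n × n` Hankel matrix of the moments of the discrete measure with mass `w k` at `x k`.
A moment whose series diverges has the junk value `0`. -/
noncomputable def momentMatrix (w x : ι → ℝ) (n : ℕ) : Matrix (Fin n) (Fin n) ℝ :=
  Matrix.of fun i j ↦ ∑' k, w k * x k ^ (i + j : ℕ)

lemma isSymm_momentMatrix (w x : ι → ℝ) (n : ℕ) : (momentMatrix w x n).IsSymm := by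
  ext i j
  simp [momentMatrix, add_comm]

lemma eval_ofFn {R : Type*} [CommSemiring R] [DecidableEq R] {n : ℕ} (v : Fin n → R) (t : R) :
    (ofFn n v).eval t = ∑ i, v i * t ^ (i : ℕ) := by
  simp [ofFn_eq_sum_monomial, eval_finsetSum]

lemma hasSum_dotProduct_momentMatrix_mulVec (hw : ∀ m : ℕ, Summable fun k ↦ w k * x k ^ m)
    {n : ℕ} (u v : Fin n → ℝ) :
    HasSum (fun k ↦ w k * ((ofFn n u).eval (x k) * (ofFn n v).eval (x k)))
      (u ⬝ᵥ momentMatrix w x n *ᵥ v) := by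
  have termwise : HasSum
      (fun k ↦ ∑ i : Fin n, u i * ∑ j : Fin n, w k * x k ^ (i + j : ℕ) * v j)
      (u ⬝ᵥ momentMatrix w x n *ᵥ v) :=
    hasSum_sum fun i _ ↦ .mul_left (u i) <| hasSum_sum fun j _ ↦
      .mul_right (v j) (hw (i + j : ℕ)).hasSum
  convert termwise using 2 with k
  rw [eval_ofFn, eval_ofFn, sum_mul_sum]
  simp only [mul_sum]
  refine sum_congr rfl fun i _ ↦ sum_congr rfl fun j _ ↦ ?_
  ring

lemma posDef_momentMatrix (hw : ∀ m : ℕ, Summable fun k ↦ w k * x k ^ m)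
    (hw_pos : ∀ k, 0 < w k) (hx : (Set.range x).Infinite) (n : ℕ) :
    (momentMatrix w x n).PosDef := by
  refine .of_dotProduct_mulVec_pos (isSymm_momentMatrix w x n) fun v hv ↦ ?_
  have hsum := hasSum_dotProduct_momentMatrix_mulVec hw v v
  have term_nonneg (k : ι) : 0 ≤ w k * ((ofFn n v).eval (x k) * (ofFn n v).eval (x k)) :=
    mul_nonneg (hw_pos k).le (mul_self_nonneg _)
  obtain ⟨k, hk⟩ : ∃ k, (ofFn n v).eval (x k) ≠ 0 := by
    by_contra! vanishes
    have ofFn_eq_zero : ofFn n v = 0 :=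
      eq_zero_of_infinite_isRoot _ (hx.mono (Set.range_subset_iff.2 vanishes))
    exact hv (injective_ofFn n (ofFn_eq_zero.trans (map_zero _).symm))
  have term_pos : 0 < w k * ((ofFn n v).eval (x k) * (ofFn n v).eval (x k)) :=
    mul_pos (hw_pos k) (mul_self_pos.2 hk)
  rw [star_trivial, ← hsum.tsum_eq]
  exact hsum.summable.tsum_pos term_nonneg k term_pos

lemma det_momentMatrix_eq_of_monic (hw : ∀ m : ℕ, Summable fun k ↦ w k * x k ^ m) {n : ℕ}
    {p : Fin n → ℝ[X]} (hdeg : ∀ i, (p i).natDegree = i) (hmonic : ∀ i, (p i).Monic) :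
    (momentMatrix w x n).det =
      (Matrix.of fun i j ↦ ∑' k, w k * ((p i).eval (x k) * (p j).eval (x k))).det := by
  set P : Matrix (Fin n) (Fin n) ℝ := Matrix.of fun i j ↦ (p j).coeff i
  have det_P : P.det = 1 := Matrix.det_matrixOfPolynomials p hdeg hmonic
  have ofFn_col (i : Fin n) : ofFn n (Pᵀ i) = p i :=
    ofFn_comp_toFn_eq_id_of_natDegree_lt ((hdeg i).trans_lt i.is_lt)
  have change_basis : Pᵀ * momentMatrix w x n * P =
      Matrix.of fun i j ↦ ∑' k, w k * ((p i).eval (x k) * (p j).eval (x k)) := by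
    ext i j
    have hsum := hasSum_dotProduct_momentMatrix_mulVec hw (Pᵀ i) (Pᵀ j)
    rw [ofFn_col, ofFn_col] at hsum
    rw [Matrix.of_apply, hsum.tsum_eq, Matrix.mul_assoc]
    rfl
  rw [← change_basis, Matrix.det_mul, Matrix.det_mul, Matrix.det_transpose, det_P, one_mul, mul_one]

end MomentMatrix

section AntitoneNodes

variable {w x : ℕ → ℝ}

lemma abs_eval_nodal_range_le (hx : Antitone x) (hx_nonneg : ∀ k, 0 ≤ x k) (l k : ℕ) :
    |(Lagrange.nodal (range l) x).eval (x k)| ≤ ∏ i ∈ range l, x i := by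
  rcases lt_or_ge k l with hkl | hlk
  · rw [Lagrange.eval_nodal_at_node (mem_range.2 hkl), abs_zero]
    exact prod_nonneg fun i _ ↦ hx_nonneg i
  · rw [Lagrange.eval_nodal, abs_prod]
    refine prod_le_prod (fun i _ ↦ abs_nonneg _) fun i hi ↦ ?_
    have hki : x k ≤ x i := hx ((mem_range.1 hi).le.trans hlk)
    rw [abs_sub_comm, abs_of_nonneg (sub_nonneg.2 hki)]
    exact sub_le_self _ (hx_nonneg k)

lemma abs_det_momentMatrix_le (hw : ∀ m : ℕ, Summable fun k ↦ w k * x k ^ m)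
    (hw_nonneg : ∀ k, 0 ≤ w k) (hx : Antitone x) (hx_nonneg : ∀ k, 0 ≤ x k) (n : ℕ) :
    |(momentMatrix w x n).det| ≤
      n ! * (∑' k, w k) ^ n * (∏ l ∈ range n, ∏ i ∈ range l, x i) ^ 2 := by
  set c : ℕ → ℝ := fun l ↦ ∏ i ∈ range l, x i
  set p : Fin n → ℝ[X] := fun l ↦ Lagrange.nodal (range l) x
  have hc (l : ℕ) : 0 ≤ c l := prod_nonneg fun i _ ↦ hx_nonneg i
  have hsum : HasSum w (∑' k, w k) := (by simpa using hw 0 : Summable w).hasSum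
  have entry_le (i j : Fin n) :
      ‖∑' k, w k * ((p i).eval (x k) * (p j).eval (x k))‖ ≤ ((∑' k, w k) * c i) * c j := by
    rw [mul_assoc]
    refine tsum_of_norm_bounded (hsum.mul_right (c i * c j)) fun k ↦ ?_
    rw [norm_mul, norm_mul, Real.norm_of_nonneg (hw_nonneg k)]
    exact mul_le_mul_of_nonneg_left (mul_le_mul (abs_eval_nodal_range_le hx hx_nonneg i k)
      (abs_eval_nodal_range_le hx hx_nonneg j k) (norm_nonneg _) (hc i)) (hw_nonneg k)
  rw [det_momentMatrix_eq_of_monic hw (p := p) (fun i ↦ by simp [p, Lagrange.natDegree_nodal])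
    fun i ↦ Lagrange.nodal_monic]
  refine (norm_det_le_of_norm_le_mul entry_le).trans_eq ?_
  rw [prod_mul_distrib, Fin.prod_univ_eq_prod_range c, Fintype.card_fin, prod_const, card_univ,
    Fintype.card_fin]
  ring

end AntitoneNodes

section Factorial

lemma mul_log_sub_le_log_factorial {t : ℝ} (ht : 0 < t) (l : ℕ) :
    l * Real.log t - t ≤ Real.log l ! := by
  have hexp : Real.log (t ^ l / l !) ≤ t :=
    (Real.log_le_iff_le_exp (by positivity)).2 (Real.pow_div_factorial_le_exp t ht.le l)
  rw [Real.log_div (by positivity) (by positivity), Real.log_pow] at hexp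
  linarith

lemma le_sum_range_log_factorial (n : ℕ) :
    n * (n - 1) / 2 * Real.log n - n ^ 2 ≤ ∑ l ∈ range n, Real.log l ! := by
  rcases n.eq_zero_or_pos with rfl | hn
  · simp
  have gauss : ∑ l ∈ range n, (l : ℝ) = n * (n - 1) / 2 := by
    rw [eq_div_iff two_ne_zero, ← Nat.cast_pred hn, ← Nat.cast_sum]
    exact_mod_cast sum_range_id_mul_two n
  calc n * (n - 1) / 2 * Real.log n - n ^ 2
    _ = ∑ l ∈ range n, (l * Real.log n - n) := by
      rw [sum_sub_distrib, ← sum_mul, gauss, sum_const, card_range, nsmul_eq_mul, sq]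
    _ ≤ ∑ l ∈ range n, Real.log l ! :=
      sum_le_sum fun l _ ↦ mul_log_sub_le_log_factorial (Nat.cast_pos.2 hn) l

lemma log_factorial_le_mul_log (n : ℕ) : Real.log n ! ≤ n * Real.log n := by
  rw [← Real.log_pow]
  exact Real.log_le_log (by positivity) (by exact_mod_cast n.factorial_le_pow)

lemma prod_range_add_one_rpow_neg (a : ℝ) (l : ℕ) :
    ∏ i ∈ range l, ((i : ℝ) + 1) ^ (-a) = (l ! : ℝ) ^ (-a) := by
  rw [Real.finsetProd_rpow _ _ fun i _ ↦ by positivity, ← prod_range_add_one_eq_factorial]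
  push_cast
  rfl

end Factorial

section Zeta

variable {a b : ℝ}

lemma summable_add_one_rpow_neg {s : ℝ} (hs : 1 < s) :
    Summable fun k : ℕ ↦ ((k : ℝ) + 1) ^ (-s) := by
  simpa using (summable_nat_add_iff 1).2 (Real.summable_nat_rpow.2 (neg_lt_neg hs))

lemma riemannZeta_ofReal_eq_tsum {s : ℝ} (hs : 1 < s) :
    riemannZeta s = ((∑' k : ℕ, ((k : ℝ) + 1) ^ (-s) : ℝ) : ℂ) := by
  rw [zeta_eq_tsum_one_div_nat_add_one_cpow (by simpa using hs), Complex.ofReal_tsum]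
  refine tsum_congr fun k ↦ ?_
  rw [Complex.ofReal_cpow (by positivity)]
  push_cast
  rw [Complex.cpow_neg, one_div]

/-- The Hankel matrix of the real numbers `ζ(a(i+j+2)+b)`, indexed from `i = j = 0`, written as the
moment matrix of the measure with mass `(k+1)^(-(2a+b))` at `(k+1)^(-a)`, `k : ℕ`. -/
noncomputable def zetaMomentMatrix (a b : ℝ) (n : ℕ) : Matrix (Fin n) (Fin n) ℝ :=
  momentMatrix (fun k : ℕ ↦ ((k : ℝ) + 1) ^ (-(2 * a + b))) (fun k ↦ ((k : ℝ) + 1) ^ (-a)) n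

lemma add_one_rpow_mul_rpow_pow (a b : ℝ) (k m : ℕ) :
    ((k : ℝ) + 1) ^ (-(2 * a + b)) * (((k : ℝ) + 1) ^ (-a)) ^ m =
      ((k : ℝ) + 1) ^ (-(a * (m + 2) + b)) := by
  rw [← Real.rpow_mul_natCast (by positivity), ← Real.rpow_add (by positivity)]
  ring_nf

lemma one_lt_mul_add_two_add (ha : 0 ≤ a) (hab : 1 < 2 * a + b) (m : ℕ) :
    1 < a * (m + 2) + b := by
  linarith [mul_nonneg ha (m.cast_nonneg (α := ℝ))]

lemma summable_zeta_moment (ha : 0 ≤ a) (hab : 1 < 2 * a + b) (m : ℕ) :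
    Summable fun k : ℕ ↦ ((k : ℝ) + 1) ^ (-(2 * a + b)) * (((k : ℝ) + 1) ^ (-a)) ^ m := by
  simp only [add_one_rpow_mul_rpow_pow]
  exact summable_add_one_rpow_neg (one_lt_mul_add_two_add ha hab m)

lemma hankel_zeta_eq_map_zetaMomentMatrix (ha : 0 ≤ a) (hab : 1 < 2 * a + b) (n : ℕ) :
    (Matrix.of fun i j : Fin n ↦ riemannZeta ((a * ((i : ℕ) + (j : ℕ) + 2) + b : ℝ) : ℂ)) =
      Complex.ofRealHom.mapMatrix (zetaMomentMatrix a b n) := by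
  ext i j
  have hs := one_lt_mul_add_two_add ha hab (i + j : ℕ)
  rw [Nat.cast_add] at hs
  simp only [zetaMomentMatrix, momentMatrix, RingHom.mapMatrix_apply, Matrix.map_apply,
    Matrix.of_apply, add_one_rpow_mul_rpow_pow, Nat.cast_add]
  exact riemannZeta_ofReal_eq_tsum hs

lemma det_zetaMomentMatrix_pos (ha : 0 < a) (hab : 1 < 2 * a + b) (n : ℕ) :
    0 < (zetaMomentMatrix a b n).det := by
  have nodes_injective : Function.Injective fun k : ℕ ↦ ((k : ℝ) + 1) ^ (-a) := fun i j hij ↦ by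
    simpa using (Real.rpow_left_inj (by positivity) (by positivity) (neg_ne_zero.2 ha.ne')).1 hij
  exact (posDef_momentMatrix (summable_zeta_moment ha.le hab) (fun k ↦ by positivity)
    (Set.infinite_range_of_injective nodes_injective) n).det_pos

lemma det_zetaMomentMatrix_le (ha : 0 ≤ a) (hab : 1 < 2 * a + b) (n : ℕ) :
    (zetaMomentMatrix a b n).det ≤
      n ! * (∑' k : ℕ, ((k : ℝ) + 1) ^ (-(2 * a + b))) ^ n *
        (∏ l ∈ range n, (l ! : ℝ) ^ (-a)) ^ 2 := by
  have nodes_antitone : Antitone fun k : ℕ ↦ ((k : ℝ) + 1) ^ (-a) := fun i j hij ↦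
    Real.rpow_le_rpow_of_nonpos (by positivity) (by gcongr) (neg_nonpos.2 ha)
  simp only [← prod_range_add_one_rpow_neg]
  exact (le_abs_self _).trans (abs_det_momentMatrix_le (summable_zeta_moment ha hab)
    (fun k ↦ by positivity) nodes_antitone (fun k ↦ by positivity) n)

lemma log_det_zetaMomentMatrix_le (ha : 0 < a) (hab : 1 < 2 * a + b) (n : ℕ) :
    Real.log (zetaMomentMatrix a b n).det ≤
      Real.log n ! + n * Real.log (∑' k : ℕ, ((k : ℝ) + 1) ^ (-(2 * a + b))) -
        2 * a * ∑ l ∈ range n, Real.log l ! := by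
  have tsum_pos : 0 < ∑' k : ℕ, ((k : ℝ) + 1) ^ (-(2 * a + b)) :=
    (summable_add_one_rpow_neg hab).tsum_pos (fun k ↦ by positivity) 0 (by positivity)
  have log_prod : Real.log (∏ l ∈ range n, (l ! : ℝ) ^ (-a)) =
      -a * ∑ l ∈ range n, Real.log l ! := by
    rw [Real.log_prod fun l _ ↦ by positivity, mul_sum]
    exact sum_congr rfl fun l _ ↦ Real.log_rpow (by positivity) _
  refine (Real.log_le_log (det_zetaMomentMatrix_pos ha hab n)
    (det_zetaMomentMatrix_le ha.le hab n)).trans_eq ?_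
  rw [Real.log_mul (by positivity) (by positivity), Real.log_mul (by positivity) (by positivity),
    Real.log_pow, Real.log_pow, log_prod]
  push_cast
  ring

end Zeta

theorem log_hankel_det_zeta_upper_bound_general {a b : ℝ} (ha : 0 < a) (hab : 1 < 2 * a + b) :
    ∃ C : ℝ, 0 < C ∧ ∀ n : ℕ,
      Real.log ‖Matrix.det (Matrix.of fun i j : Fin n ↦
          riemannZeta ((a * ((i : ℕ) + (j : ℕ) + 2) + b : ℝ) : ℂ))‖ ≤
        -a * (n : ℝ) ^ 2 * Real.log n + C * (n : ℝ) ^ 2 := by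
  set S : ℝ := ∑' k : ℕ, ((k : ℝ) + 1) ^ (-(2 * a + b))
  refine ⟨1 + |Real.log S| + 3 * a, by positivity, fun n ↦ ?_⟩
  rw [hankel_zeta_eq_map_zetaMomentMatrix ha.le hab, ← RingHom.map_det, Complex.ofRealHom_eq_coe,
    Complex.norm_real, Real.norm_eq_abs, Real.log_abs]
  have self_le_sq : (n : ℝ) ≤ n ^ 2 := by exact_mod_cast Nat.le_self_pow two_ne_zero n
  have mul_log_le_sq : n * Real.log n ≤ n ^ 2 := by
    rw [sq]; gcongr; exact Real.log_le_self n.cast_nonneg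
  have mul_log_S_le : n * Real.log S ≤ |Real.log S| * n ^ 2 := by
    rw [mul_comm]; gcongr; exact le_abs_self _
  calc Real.log (zetaMomentMatrix a b n).det
    _ ≤ Real.log n ! + n * Real.log S - 2 * a * ∑ l ∈ range n, Real.log l ! :=
      log_det_zetaMomentMatrix_le ha hab n
    _ ≤ n * Real.log n + n * Real.log S - 2 * a * (n * (n - 1) / 2 * Real.log n - n ^ 2) := by
      gcongr
      · exact log_factorial_le_mul_log n
      · exact le_sum_range_log_factorial n
    _ = -a * n ^ 2 * Real.log n +
        (n * Real.log n + n * Real.log S + a * (n * Real.log n) + 2 * a * n ^ 2) := by ring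
    _ ≤ -a * n ^ 2 * Real.log n + (n ^ 2 + |Real.log S| * n ^ 2 + a * n ^ 2 + 2 * a * n ^ 2) := by
      gcongr
    _ = -a * n ^ 2 * Real.log n + (1 + |Real.log S| + 3 * a) * n ^ 2 := by ring

/-- For positive integers `a, b`, the Hankel determinant of zeta values satisfies
`log |det_{1≤i,j≤n} (ζ(a(i+j)+b))| ≤ -(a/2) n² log n + C' n²` for all sufficiently
large `n`. -/
theorem log_hankel_det_zeta_upper_bound
    (a b : ℕ) (ha : 0 < a) (hb : 0 < b) :
    ∃ C' : ℝ, 0 < C' ∧ ∀ᶠ n : ℕ in Filter.atTop,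
      Real.log ‖Matrix.det (Matrix.of fun i j : Fin n =>
          riemannZeta ((a * ((i : ℕ) + (j : ℕ) + 2) + b : ℕ) : ℂ))‖ ≤
        -((a : ℝ) / 2) * (n : ℝ) ^ 2 * Real.log n + C' * (n : ℝ) ^ 2 := by
  obtain ⟨C, hC, bound⟩ := log_hankel_det_zeta_upper_bound_general (a := a) (b := b)
    (Nat.cast_pos.2 ha) (by exact_mod_cast (by lia : 1 < 2 * a + b))
  refine ⟨C, hC, .of_forall fun n ↦ ?_⟩
  have half_le : -(a : ℝ) ≤ -(a / 2) := neg_le_neg (half_le_self a.cast_nonneg)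
  calc _ ≤ -(a : ℝ) * n ^ 2 * Real.log n + C * n ^ 2 := by exact_mod_cast bound n
    _ ≤ -((a : ℝ) / 2) * n ^ 2 * Real.log n + C * n ^ 2 := by gcongr
end

section
/- Let 2 ≤ n_1 < n_2 < n_3 < ⋯ be a strictly increasing sequence of integers such that ζ(n_m) is rational for every m. Then the Hankel determinants det_{1≤i,j≤n}(ζ(n_{i+j-1})) are nonzero for infinitely many n. -/
/-!
If only finitely many Hankel determinants of a sequence `a` are nonzero, let `K` be the largest
index of a nonzero one. A kernel vector of the `(K + 1) × (K + 1)` Hankel matrix is a monic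
polynomial `p` of degree `K` whose shifts `X ^ m * p`, `m < K`, are annihilated by the functional
`X ^ i ↦ a i`; each further vanishing determinant forces one more shift to be annihilated
(Kronecker), so `a` eventually satisfies a linear recurrence with nonzero head coefficient `c 0`.

Now let `a m = L(n m)` for a Dirichlet series `L` with infinitely many nonzero coefficients `f k`.
Letting `m → ∞` in the recurrence shows that the constant term `f 1` may be dropped. Then
`L(x) ≍ k ^ (-x)`, where `k ≥ 2` is the first index with `f k ≠ 0`, and the recurrence bounds the
gaps of `n`. By the pigeonhole principle the pattern `e i = n (m + i) - n m` is the same for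
infinitely many `m`, so the Dirichlet series with coefficients `f k * ∑ i, c i * k ^ (-e i)`
vanishes at infinitely many integers and hence identically. As `k → ∞` along the support of `f`,
this gives `c 0 = 0`.
-/

section Hankel

open Polynomial Filter

/-- The `N × N` Hankel matrix of the sequence `a`, indexed from `0`: its top left entry is `a 0`. -/
def hankelMatrix {R : Type*} (a : ℕ → R) (N : ℕ) : Matrix (Fin N) (Fin N) R :=
  Matrix.of fun i j => a (i + j)

section CommRing
variable {R : Type*} [CommRing R] (a : ℕ → R)

/-- The linear functional on polynomials with moments `a`, i.e. sending `X ^ i` to `a i`. It turns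
kernel vectors of Hankel matrices into polynomials orthogonal to low powers of `X`. -/
noncomputable def momentFunctional : R[X] →ₗ[R] R :=
  lsum fun i => LinearMap.mulRight R (a i)

theorem momentFunctional_monomial (i : ℕ) (r : R) :
    momentFunctional a (monomial i r) = r * a i := by
  simp [momentFunctional, lsum_apply]

theorem momentFunctional_X_pow_mul {p : R[X]} {N : ℕ} (hp : p.degree < N) (m : ℕ) :
    momentFunctional a (X ^ m * p) = ∑ i : Fin N, p.coeff i * a (m + i) := by
  conv_lhs =>
    rw [← sum_monomial_eq p, ← sum_fin _ (by simp) hp, Finset.mul_sum, map_sum]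
  simp_rw [X_pow_mul_monomial, momentFunctional_monomial, add_comm]

theorem hankelMatrix_mulVec_degreeLTEquiv {N : ℕ} (p : degreeLT R N) :
    (hankelMatrix a N).mulVec (degreeLTEquiv R N p) =
      fun i : Fin N => momentFunctional a (X ^ (i : ℕ) * p.1) := by
  ext i
  rw [momentFunctional_X_pow_mul a (mem_degreeLT.1 p.2), Matrix.mulVec, dotProduct]
  exact Finset.sum_congr rfl fun j _ => mul_comm _ _

variable {a}

theorem momentFunctional_mul_of_natDegree_le {p q : R[X]} {m : ℕ}
    (hp : ∀ r < m, momentFunctional a (X ^ r * p) = 0) (hq : q.natDegree ≤ m) :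
    momentFunctional a (q * p) = q.coeff m * momentFunctional a (X ^ m * p) := by
  have hterm (i : ℕ) : momentFunctional a (monomial i (q.coeff i) * p) =
      q.coeff i * momentFunctional a (X ^ i * p) := by
    rw [← C_mul_X_pow_eq_monomial, mul_assoc, ← smul_eq_C_mul, map_smul, smul_eq_mul]
  conv_lhs => rw [q.as_sum_range' (m + 1) (Nat.lt_succ_of_le hq), Finset.sum_mul, map_sum]
  rw [Finset.sum_range_succ, hterm, Finset.sum_eq_zero, zero_add]
  intro i hi
  rw [hterm, hp i (Finset.mem_range.1 hi), mul_zero]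

variable [IsDomain R]

theorem det_hankelMatrix_eq_zero_iff {N : ℕ} :
    (hankelMatrix a N).det = 0 ↔
      ∃ p : R[X], p ≠ 0 ∧ p.degree < N ∧ ∀ r < N, momentFunctional a (X ^ r * p) = 0 := by
  rw [← Matrix.exists_mulVec_eq_zero_iff, (degreeLTEquiv R N).surjective.exists]
  simp_rw [hankelMatrix_mulVec_degreeLTEquiv, (degreeLTEquiv R N).map_ne_zero_iff, funext_iff,
    Fin.forall_iff, Pi.zero_apply, Subtype.exists, mem_degreeLT, ne_eq, Submodule.mk_eq_zero,
    exists_prop, and_left_comm]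

theorem dvd_of_det_hankelMatrix_ne_zero {p v : R[X]} (hp : p.Monic)
    (hdet : (hankelMatrix a p.natDegree).det ≠ 0) {m : ℕ} (hpm : p.natDegree ≤ m)
    (hvm : v.natDegree ≤ m) (hpann : ∀ r < m, momentFunctional a (X ^ r * p) = 0)
    (hvann : ∀ r < p.natDegree, momentFunctional a (X ^ r * v) = 0) : p ∣ v := by
  rw [← modByMonic_eq_zero_iff_dvd hp]
  by_contra hmod
  refine hdet (det_hankelMatrix_eq_zero_iff.2 ⟨v %ₘ p, hmod, ?_, fun r hr => ?_⟩)
  · rw [← degree_eq_natDegree hp.ne_zero]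
    exact degree_modByMonic_lt v hp
  have hdeg : (X ^ r * (v /ₘ p)).natDegree < m := by
    have hquot := natDegree_divByMonic v hp
    have hmul := natDegree_mul_le (p := X ^ r) (q := v /ₘ p)
    rw [natDegree_X_pow] at hmul
    omega
  have hquot : momentFunctional a (X ^ r * (v /ₘ p) * p) = 0 := by
    rw [momentFunctional_mul_of_natDegree_le hpann hdeg.le, coeff_eq_zero_of_natDegree_lt hdeg,
      zero_mul]
  calc momentFunctional a (X ^ r * (v %ₘ p))
      = momentFunctional a (X ^ r * (v %ₘ p + p * (v /ₘ p))) := by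
        rw [mul_add, map_add, mul_comm p, ← mul_assoc, hquot, add_zero]
    _ = 0 := by rw [modByMonic_add_div, hvann r hr]

theorem momentFunctional_X_pow_mul_eq_zero_of_det_hankelMatrix {p : R[X]} (hp : p.Monic)
    (hdet : (hankelMatrix a p.natDegree).det ≠ 0) {m : ℕ} (hpm : p.natDegree ≤ m)
    (hdet' : (hankelMatrix a (m + 1)).det = 0)
    (hpann : ∀ r < m, momentFunctional a (X ^ r * p) = 0) :
    momentFunctional a (X ^ m * p) = 0 := by
  obtain ⟨v, hv0, hvdeg, hvann⟩ := det_hankelMatrix_eq_zero_iff.1 hdet'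
  have hvm : v.natDegree ≤ m := Nat.le_of_lt_succ ((natDegree_lt_iff_degree_lt hv0).2 hvdeg)
  obtain ⟨q, rfl⟩ := dvd_of_det_hankelMatrix_ne_zero hp hdet hpm hvm hpann
    fun r hr => hvann r (by omega)
  have hq0 : q ≠ 0 := right_ne_zero_of_mul hv0
  have hqm : q.natDegree ≤ m := (natDegree_le_of_dvd (dvd_mul_left q p) hv0).trans hvm
  have hdeg : (X ^ (m - q.natDegree) * q).natDegree = m := by
    rw [natDegree_X_pow_mul _ hq0, Nat.add_sub_cancel' hqm]
  have hlead : (X ^ (m - q.natDegree) * q).coeff m ≠ 0 := by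
    rwa [← leadingCoeff_ne_zero, ← leadingCoeff_monic_mul (monic_X_pow (m - q.natDegree)),
      leadingCoeff, hdeg] at hq0
  have hzero := hvann (m - q.natDegree) (by omega)
  rw [mul_comm p, ← mul_assoc, momentFunctional_mul_of_natDegree_le hpann hdeg.le] at hzero
  exact (mul_eq_zero.1 hzero).resolve_left hlead

end CommRing

section Field
variable {F : Type*} [Field F] {a : ℕ → F}

theorem exists_monic_natDegree_eq_of_det_hankelMatrix {K : ℕ} (hK : (hankelMatrix a K).det ≠ 0)
    (hK' : (hankelMatrix a (K + 1)).det = 0) :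
    ∃ p : F[X], p.Monic ∧ p.natDegree = K ∧ ∀ r < K, momentFunctional a (X ^ r * p) = 0 := by
  obtain ⟨p, hp0, hpdeg, hpann⟩ := det_hankelMatrix_eq_zero_iff.1 hK'
  have hdeg : p.natDegree = K := by
    refine le_antisymm (Nat.le_of_lt_succ ((natDegree_lt_iff_degree_lt hp0).2 hpdeg)) ?_
    by_contra! hlt
    exact hK (det_hankelMatrix_eq_zero_iff.2
      ⟨p, hp0, (natDegree_lt_iff_degree_lt hp0).1 hlt, fun r hr => hpann r (by omega)⟩)
  refine ⟨p * C p.leadingCoeff⁻¹, monic_mul_leadingCoeff_inv hp0, ?_, fun r hr => ?_⟩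
  · rw [natDegree_mul_leadingCoeff_inv p hp0, hdeg]
  · rw [mul_comm p, mul_left_comm, ← smul_eq_C_mul, map_smul, hpann r (by omega), smul_zero]

theorem exists_monic_momentFunctional_X_pow_mul_eq_zero
    (h : {N | (hankelMatrix a N).det ≠ 0}.Finite) :
    ∃ p : F[X], p.Monic ∧ ∀ m, momentFunctional a (X ^ m * p) = 0 := by
  obtain ⟨K, hK, hmax⟩ := h.exists_maximal ⟨0, by simp⟩
  have hdet (N : ℕ) (hN : K < N) : (hankelMatrix a N).det = 0 :=
    not_not.1 fun hN' => hN.not_ge (hmax hN' hN.le)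
  obtain ⟨p, hp, rfl, hpann⟩ :=
    exists_monic_natDegree_eq_of_det_hankelMatrix hK (hdet (K + 1) K.lt_succ_self)
  refine ⟨p, hp, fun m => ?_⟩
  induction m using Nat.strong_induction_on with
  | _ m ih =>
    rcases lt_or_ge m p.natDegree with hm | hm
    · exact hpann m hm
    · exact momentFunctional_X_pow_mul_eq_zero_of_det_hankelMatrix hp hK hm
        (hdet (m + 1) (by omega)) ih

theorem exists_eventually_linear_recurrence_of_finite_det_hankelMatrix_ne_zero
    (h : {N | (hankelMatrix a N).det ≠ 0}.Finite) :
    ∃ (d : ℕ) (c : Fin (d + 1) → F), c 0 ≠ 0 ∧ ∀ᶠ m in atTop, ∑ i, c i * a (m + i) = 0 := by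
  obtain ⟨p, hp, hann⟩ := exists_monic_momentFunctional_X_pow_mul_eq_zero h
  obtain ⟨t, q, hXq, rfl⟩ := WfDvdMonoid.max_power_factor hp.ne_zero irreducible_X
  refine ⟨q.natDegree, fun i => q.coeff i, mt X_dvd_iff.2 hXq, ?_⟩
  filter_upwards [eventually_ge_atTop t] with m hm
  have hqdeg : q.degree < (q.natDegree + 1 : ℕ) :=
    degree_le_natDegree.trans_lt (mod_cast q.natDegree.lt_succ_self)
  rw [← momentFunctional_X_pow_mul a hqdeg, ← hann (m - t), ← mul_assoc, ← pow_add,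
    Nat.sub_add_cancel hm]

end Field

end Hankel

section Growth

open Filter Asymptotics

theorem exists_frequently_eq_of_eventually_mem {α β : Type*} {l : Filter α} [l.NeBot] {g : α → β}
    {s : Set β} (hs : s.Finite) (hg : ∀ᶠ x in l, g x ∈ s) : ∃ b, ∃ᶠ x in l, g x = b := by
  by_contra! h
  obtain ⟨x, hxs, hx⟩ := (hg.and ((eventually_all_finite hs).2 fun b _ => h b)).exists
  exact hx (g x) hxs rfl

theorem exists_frequently_shift_eq {n : ℕ → ℕ} (hn : Monotone n) {D : ℕ}
    (hD : ∀ᶠ m in atTop, n (m + 1) ≤ n m + D) (d : ℕ) :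
    ∃ e : Fin (d + 1) → ℕ, ∃ᶠ m in atTop, ∀ i : Fin (d + 1), n (m + i) = n m + e i := by
  have hbound : ∀ᶠ m in atTop, ∀ i : ℕ, n (m + i) ≤ n m + i * D := by
    obtain ⟨M, hM⟩ := eventually_atTop.1 hD
    filter_upwards [eventually_ge_atTop M] with m hm i
    induction i with
    | zero => simp
    | succ i ih =>
      calc n (m + i + 1) ≤ n (m + i) + D := hM (m + i) (by omega)
        _ ≤ n m + (i + 1) * D := by linarith
  let gaps (m : ℕ) (i : Fin (d + 1)) : ℕ := n (m + i) - n m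
  have hgaps : ∀ᶠ m in atTop, gaps m ∈ Set.Iic fun _ => d * D := by
    filter_upwards [hbound] with m hm i
    have := Nat.mul_le_mul_right D (Fin.is_le i)
    have := hm i
    dsimp only [gaps]
    omega
  obtain ⟨e, he⟩ := exists_frequently_eq_of_eventually_mem (Set.finite_Iic _) hgaps
  refine ⟨e, he.mono ?_⟩
  rintro m rfl i
  exact (Nat.add_sub_cancel' (hn (Nat.le_add_right m i))).symm

theorem exists_eventually_le_add_of_pow_isBigO_pow {α 𝕜 : Type*} [NormedField 𝕜] {l : Filter α}
    {f g : α → ℕ} {r : 𝕜} (hr0 : r ≠ 0) (hr1 : ‖r‖ < 1)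
    (h : (fun x => r ^ f x) =O[l] fun x => r ^ g x) : ∃ D, ∀ᶠ x in l, g x ≤ f x + D := by
  obtain ⟨B, hB0, hB⟩ := h.exists_pos
  obtain ⟨D, hD⟩ := exists_pow_lt_of_lt_one (inv_pos.2 hB0) hr1
  refine ⟨D, hB.bound.mono fun x hx => ?_⟩
  by_contra! hlt
  rw [norm_pow, norm_pow] at hx
  refine hx.not_gt ?_
  calc B * ‖r‖ ^ g x ≤ B * ‖r‖ ^ (f x + D) := by
        gcongr B * ?_
        exact pow_le_pow_of_le_one (norm_nonneg r) hr1.le hlt.le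
    _ = ‖r‖ ^ f x * (B * ‖r‖ ^ D) := by ring
    _ < ‖r‖ ^ f x := by
        refine mul_lt_of_lt_one_right (pow_pos (norm_pos_iff.2 hr0) _) ?_
        rwa [← lt_inv_mul_iff₀ hB0, mul_one]

theorem exists_eventually_le_add_of_isTheta_pow {𝕜 : Type*} [NormedField 𝕜] {u : ℕ → 𝕜}
    {n : ℕ → ℕ} (hn : Monotone n) {r : 𝕜} (hr0 : r ≠ 0) (hr1 : ‖r‖ < 1)
    (hu : u =Θ[atTop] fun m => r ^ n m)
    {d : ℕ} {c : Fin (d + 1) → 𝕜} (hc : c 0 ≠ 0)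
    (hrec : ∀ᶠ m in atTop, ∑ i, c i * u (m + i) = 0) :
    ∃ D, ∀ᶠ m in atTop, n (m + 1) ≤ n m + D := by
  have htail (i : Fin d) : (fun m => c i.succ * u (m + i.succ)) =O[atTop]
      fun m => r ^ n (m + 1) := by
    have hshift : (fun m => u (m + i.succ)) =O[atTop] fun m => r ^ n (m + i.succ) :=
      hu.1.comp_tendsto (tendsto_add_atTop_nat _)
    have hmono : (fun m => r ^ n (m + i.succ)) =O[atTop] fun m => r ^ n (m + 1) := by
      refine isBigO_of_le _ fun m => ?_
      rw [norm_pow, norm_pow]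
      exact pow_le_pow_of_le_one (norm_nonneg r) hr1.le (hn (by simp))
    exact (hshift.trans hmono).const_mul_left _
  have hhead : (fun m => c 0 * u m) =ᶠ[atTop]
      fun m => -∑ i : Fin d, c i.succ * u (m + i.succ) := by
    filter_upwards [hrec] with m hm
    rw [Fin.sum_univ_succ] at hm
    exact eq_neg_of_add_eq_zero_left hm
  have hu' : u =O[atTop] fun m => r ^ n (m + 1) :=
    (isBigO_const_mul_left_iff hc).1
      (hhead.trans_isBigO (IsBigO.fun_sum fun i _ => htail i).neg_left)
  exact exists_eventually_le_add_of_pow_isBigO_pow hr0 hr1 (hu.2.trans hu')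

end Growth

section Dirichlet

open Filter Topology Asymptotics

theorem tendsto_pow_mul_LSeries_natCast {f : ℕ → ℂ} {N : ℕ} (hf : ∀ k ≤ N, f k = 0)
    (habs : LSeries.abscissaOfAbsConv f < ⊤) :
    Tendsto (fun x : ℕ => ((N : ℂ) + 1) ^ x * LSeries f x) atTop (𝓝 (f (N + 1))) := by
  simpa [Function.comp_def] using
    (LSeries.tendsto_cpow_mul_atTop hf habs).comp tendsto_natCast_atTop_atTop

theorem eq_zero_of_frequently_LSeries_natCast_eq_zero {f : ℕ → ℂ} (hf0 : f 0 = 0)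
    (habs : LSeries.abscissaOfAbsConv f < ⊤) (h : ∃ᶠ x : ℕ in atTop, LSeries f x = 0) :
    f = 0 := by
  ext k
  induction k using Nat.strong_induction_on with
  | _ k ih =>
    cases k with
    | zero => exact hf0
    | succ k =>
      exact tendsto_nhds_unique_of_frequently_eq
        (tendsto_pow_mul_LSeries_natCast (fun j hj => ih j (Nat.lt_succ_of_le hj)) habs)
        tendsto_const_nhds (h.mono fun x hx => by rw [hx, mul_zero]; rfl)

theorem LSeries_term_mul_inv_pow (f : ℕ → ℂ) (e : ℕ) (s : ℂ) :
    LSeries.term (fun k => f k * (k : ℂ)⁻¹ ^ e) s = LSeries.term f (s + e) := by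
  ext k
  rcases eq_or_ne k 0 with rfl | hk
  · simp only [LSeries.term_zero]
  · rw [LSeries.term_of_ne_zero hk, LSeries.term_of_ne_zero hk,
      Complex.cpow_add _ _ (Nat.cast_ne_zero.2 hk), Complex.cpow_natCast, inv_pow, ← div_eq_mul_inv,
      div_div, mul_comm]

theorem LSeriesHasSum_mul_sum_inv_pow {ι : Type*} [Fintype ι] {f : ℕ → ℂ} {s : ℂ}
    (hf : LSeriesSummable f s) (c : ι → ℂ) (e : ι → ℕ) :
    LSeriesHasSum (fun k => f k * ∑ i, c i * (k : ℂ)⁻¹ ^ e i) s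
      (∑ i, c i * LSeries f (s + e i)) := by
  have hterm (i : ι) : LSeriesHasSum (fun k => f k * (k : ℂ)⁻¹ ^ e i) s (LSeries f (s + e i)) := by
    rw [LSeriesHasSum, LSeries_term_mul_inv_pow]
    exact (hf.of_re_le_re (by simp)).LSeriesHasSum
  convert LSeriesHasSum.sum (S := Finset.univ) fun i _ => (hterm i).smul (c i) using 1
  ext k
  simp [Finset.mul_sum, mul_left_comm]

theorem LSeries_indicator_Ici_two {f : ℕ → ℂ} {s : ℂ} (hf : LSeriesSummable f s) :
    LSeries ((Set.Ici 2).indicator f) s = LSeries f s - f 1 := by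
  have hterm (k : ℕ) : LSeries.term ((Set.Ici 2).indicator f) s k =
      if k = 1 then 0 else LSeries.term f s k := by
    rcases k with _ | _ | k <;> simp [LSeries.term_def]
  rw [LSeries, LSeries, Summable.tsum_eq_add_tsum_ite hf 1, tsum_congr hterm]
  simp [LSeries.term_def]

theorem sum_mul_zero_pow_eq_zero_of_frequently {ι : Type*} [Fintype ι] {c : ι → ℂ} {e : ι → ℕ}
    (h : ∃ᶠ k : ℕ in atTop, ∑ i, c i * (k : ℂ)⁻¹ ^ e i = 0) : ∑ i, c i * 0 ^ e i = 0 :=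
  tendsto_nhds_unique_of_frequently_eq
    (tendsto_finsetSum _ fun i _ => (tendsto_inv_atTop_nhds_zero_nat.pow (e i)).const_mul (c i))
    tendsto_const_nhds h

theorem eventually_LSeriesSummable_natCast {f : ℕ → ℂ} (habs : LSeries.abscissaOfAbsConv f < ⊤) :
    ∀ᶠ x : ℕ in atTop, LSeriesSummable f x := by
  obtain ⟨y, hy, -⟩ := EReal.lt_iff_exists_real_btwn.1 habs
  filter_upwards [tendsto_natCast_atTop_atTop.eventually_ge_atTop y] with x hx
  refine LSeriesSummable_of_abscissaOfAbsConv_lt_re (hy.trans_le ?_)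
  rw [Complex.natCast_re]
  exact EReal.coe_le_coe_iff.2 hx

theorem exists_LSeries_isTheta_pow {f : ℕ → ℂ} (hf : f ≠ 0) (hf0 : f 0 = 0) (hf1 : f 1 = 0)
    (habs : LSeries.abscissaOfAbsConv f < ⊤) :
    ∃ r : ℂ, r ≠ 0 ∧ ‖r‖ < 1 ∧ (fun x : ℕ => LSeries f x) =Θ[atTop] fun x => r ^ x := by
  classical
  have hex : ∃ k, f (k + 1) ≠ 0 := by
    obtain ⟨k, hk⟩ := Function.ne_iff.1 hf
    cases k with
    | zero => exact absurd hf0 hk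
    | succ k => exact ⟨k, hk⟩
  obtain ⟨N, hN, hmin⟩ := Nat.findX hex
  have hlow : ∀ k ≤ N, f k = 0 := by
    rintro (_ | k) hk
    · exact hf0
    · exact not_not.1 (hmin k hk)
  have hN0 : 0 < N := Nat.pos_of_ne_zero (by rintro rfl; exact hN hf1)
  refine ⟨((N : ℂ) + 1)⁻¹, inv_ne_zero N.cast_add_one_ne_zero, ?_, ?_⟩
  · rw [norm_inv]
    refine inv_lt_one_of_one_lt₀ ?_
    norm_cast
    simpa using hN0
  · refine (isTheta_of_div_tendsto_nhds_ne_zero ?_ hN).symm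
    simpa [mul_comm, div_eq_mul_inv] using tendsto_pow_mul_LSeries_natCast hlow habs

section Recurrence
variable {f : ℕ → ℂ} {n : ℕ → ℕ} {d : ℕ} {c : Fin (d + 1) → ℂ}

theorem head_coeff_eq_zero_of_frequently_LSeries_recurrence
    (hf : f.support.Infinite) (hf0 : f 0 = 0)
    (habs : LSeries.abscissaOfAbsConv f < ⊤) (e : Fin (d + 1) → ℕ) (he0 : e 0 = 0)
    (he : ∀ i, i ≠ 0 → e i ≠ 0)
    (hrec : ∃ᶠ x : ℕ in atTop, ∑ i, c i * LSeries f (x + e i : ℕ) = 0) : c 0 = 0 := by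
  let g (k : ℕ) : ℂ := f k * ∑ i, c i * (k : ℂ)⁻¹ ^ e i
  have hsum (x : ℕ) (hx : LSeriesSummable f x) :
      LSeriesHasSum g x (∑ i, c i * LSeries f (x + e i : ℕ)) := by
    exact_mod_cast LSeriesHasSum_mul_sum_inv_pow hx c e
  have hsumm := eventually_LSeriesSummable_natCast habs
  obtain ⟨x, hx⟩ := hsumm.exists
  have hg : g = 0 := by
    refine eq_zero_of_frequently_LSeries_natCast_eq_zero (by simp [g, hf0])
      ((hsum x hx).LSeriesSummable.abscissaOfAbsConv_le.trans_lt (EReal.coe_lt_top _))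
      ((hrec.and_eventually hsumm).mono fun y hy => ?_)
    rw [(hsum y hy.2).LSeries_eq, hy.1]
  have hzero : ∑ i, c i * 0 ^ e i = 0 := by
    refine sum_mul_zero_pow_eq_zero_of_frequently
      ((Nat.frequently_atTop_iff_infinite.2 hf).mono fun k hk => ?_)
    exact (mul_eq_zero.1 (congrFun hg k)).resolve_left hk
  rw [Fin.sum_univ_succ] at hzero
  simpa [he0, he, Fin.succ_ne_zero] using hzero

theorem head_coeff_eq_zero_of_LSeries_recurrence_of_apply_one_eq_zero
    (hf : f.support.Infinite) (hf0 : f 0 = 0)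
    (hf1 : f 1 = 0) (habs : LSeries.abscissaOfAbsConv f < ⊤) (hn : StrictMono n)
    (hrec : ∀ᶠ m in atTop, ∑ i, c i * LSeries f (n (m + i)) = 0) : c 0 = 0 := by
  by_contra hc
  obtain ⟨r, hr0, hr1, hr⟩ :=
    exists_LSeries_isTheta_pow (Function.support_nonempty_iff.1 hf.nonempty) hf0 hf1 habs
  have hr_comp : (fun m => LSeries f (n m)) =Θ[atTop] fun m => r ^ n m :=
    ⟨hr.1.comp_tendsto hn.tendsto_atTop, hr.2.comp_tendsto hn.tendsto_atTop⟩
  obtain ⟨D, hD⟩ :=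
    exists_eventually_le_add_of_isTheta_pow hn.monotone hr0 hr1 hr_comp hc hrec
  obtain ⟨e, he⟩ := exists_frequently_shift_eq hn.monotone hD d
  obtain ⟨m, hm⟩ := he.exists
  refine hc (head_coeff_eq_zero_of_frequently_LSeries_recurrence hf hf0 habs e ?_ ?_ ?_)
  · simpa using hm 0
  · intro i hi
    have := hn (show m < m + i from Nat.lt_add_of_pos_right (Fin.pos_of_ne_zero hi))
    have := hm i
    omega
  · refine hn.tendsto_atTop.frequently ((he.and_eventually hrec).mono ?_)
    rintro m ⟨hshift, hm⟩
    simpa only [hshift] using hm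

theorem apply_one_mul_sum_eq_zero_of_LSeries_recurrence
    (habs : LSeries.abscissaOfAbsConv f < ⊤) (hn : Tendsto n atTop atTop)
    (hrec : ∀ᶠ m in atTop, ∑ i, c i * LSeries f (n (m + i)) = 0) : f 1 * ∑ i, c i = 0 := by
  have hlim : Tendsto (fun m => LSeries f (n m)) atTop (𝓝 (f 1)) :=
    (LSeries.tendsto_atTop habs).comp (tendsto_natCast_atTop_atTop.comp hn)
  have hsum : Tendsto (fun m => ∑ i, c i * LSeries f (n (m + i))) atTop (𝓝 (∑ i, c i * f 1)) :=
    tendsto_finsetSum _ fun i _ => (hlim.comp (tendsto_add_atTop_nat i)).const_mul (c i)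
  rw [mul_comm, Finset.sum_mul]
  exact tendsto_nhds_unique_of_eventuallyEq hsum tendsto_const_nhds hrec

theorem eventually_LSeries_indicator_Ici_two_recurrence
    (habs : LSeries.abscissaOfAbsConv f < ⊤) (hn : Tendsto n atTop atTop)
    (hrec : ∀ᶠ m in atTop, ∑ i, c i * LSeries f (n (m + i)) = 0) :
    ∀ᶠ m in atTop, ∑ i, c i * LSeries ((Set.Ici 2).indicator f) (n (m + i)) = 0 := by
  have hconst := apply_one_mul_sum_eq_zero_of_LSeries_recurrence habs hn hrec
  have hsummable : ∀ᶠ m in atTop, ∀ i : Fin (d + 1), LSeriesSummable f (n (m + i)) :=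
    eventually_all.2 fun i =>
      (hn.comp (tendsto_add_atTop_nat i)).eventually (eventually_LSeriesSummable_natCast habs)
  filter_upwards [hrec, hsummable] with m hm hsumm
  calc ∑ i, c i * LSeries ((Set.Ici 2).indicator f) (n (m + i))
      = ∑ i, c i * LSeries f (n (m + i)) - f 1 * ∑ i, c i := by
        rw [Finset.mul_sum, ← Finset.sum_sub_distrib]
        refine Finset.sum_congr rfl fun i _ => ?_
        rw [LSeries_indicator_Ici_two (hsumm i)]
        ring
    _ = 0 := by rw [hm, hconst, sub_zero]

theorem head_coeff_eq_zero_of_LSeries_recurrence (hf : f.support.Infinite)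
    (habs : LSeries.abscissaOfAbsConv f < ⊤) (hn : StrictMono n)
    (hrec : ∀ᶠ m in atTop, ∑ i, c i * LSeries f (n (m + i)) = 0) : c 0 = 0 := by
  have heq : (Set.Ici 2).indicator f =ᶠ[atTop] f := by
    filter_upwards [eventually_ge_atTop 2] with k hk using Set.indicator_of_mem hk f
  have hsupp : ((Set.Ici 2).indicator f).support.Infinite := by
    refine Nat.frequently_atTop_iff_infinite.1
      (((Nat.frequently_atTop_iff_infinite.2 hf).and_eventually heq).mono ?_)
    rintro k ⟨hfk, hk⟩
    exact hk.trans_ne hfk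
  exact head_coeff_eq_zero_of_LSeries_recurrence_of_apply_one_eq_zero hsupp (by simp) (by simp)
    (by rwa [LSeries.abscissaOfAbsConv_congr' heq]) hn
    (eventually_LSeries_indicator_Ici_two_recurrence habs hn.tendsto_atTop hrec)

end Recurrence

end Dirichlet

theorem hankel_det_zeta_values_ne_zero_infinitely_often_general {f : ℕ → ℂ}
    (hf : f.support.Infinite) {n : ℕ → ℕ} (hn : StrictMono n)
    (hsum : LSeriesSummable f (n 0)) :
    {N | (hankelMatrix (fun m => LSeries f (n m)) N).det ≠ 0}.Infinite := by
  intro hfin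
  obtain ⟨d, c, hc, hrec⟩ :=
    exists_eventually_linear_recurrence_of_finite_det_hankelMatrix_ne_zero hfin
  have habs : LSeries.abscissaOfAbsConv f < ⊤ :=
    hsum.abscissaOfAbsConv_le.trans_lt (EReal.coe_lt_top _)
  exact hc (head_coeff_eq_zero_of_LSeries_recurrence hf habs hn hrec)

/-- **Lemma 4** (Haynes–Zudilin). Let `n 0 < n 1 < ⋯` be a strictly increasing sequence
of integers with `n 0 ≥ 2` (so `n m` is the paper's `n_{m+1}`) such that every `ζ(n m)`
is rational. Then the Hankel determinants `det_{1≤i,j≤N} (ζ(n_{i+j-1}))` are nonzero for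
infinitely many `N`. With the zero-based indexing here, the `(i,j)` entry of the `N × N`
matrix is `ζ(n (i+j))` for `i, j : Fin N`. -/
theorem hankel_det_zeta_values_ne_zero_infinitely_often
    (n : ℕ → ℕ) (hn2 : 2 ≤ n 0) (hmono : StrictMono n)
    (hrat : ∀ m : ℕ, ∃ q : ℚ, riemannZeta ((n m : ℕ) : ℂ) = (q : ℂ)) :
    {N : ℕ | Matrix.det (Matrix.of fun i j : Fin N =>
        riemannZeta ((n ((i : ℕ) + (j : ℕ)) : ℕ) : ℂ)) ≠ 0}.Infinite := by
  have one_lt_re (m : ℕ) : 1 < ((n m : ℕ) : ℂ).re := by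
    exact_mod_cast hn2.trans (hmono.monotone m.zero_le)
  simpa only [hankelMatrix, LSeries_one_eq_riemannZeta (one_lt_re _)] using
    hankel_det_zeta_values_ne_zero_infinitely_often_general (f := 1)
      (by simpa using Set.infinite_univ) hmono (LSeriesSummable_one_iff.2 (one_lt_re 0))
end
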